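/- arXiv:1504.04279 — 3 statements merged into one kernel-verified Lean document; each statement's English description precedes it below -/
import Mathlib

section
/- The simplicial complex C_3 obtained by gluing 3 disjoint copies of X̄ along A is not partitionable. -/
/-- The facets (maximal faces) of a collection of finite sets. -/
def facets {V : Type*} [DecidableEq V] (Φ : Finset (Finset V)) : Finset (Finset V) :=
  Φ.filter (fun F => ∀ G ∈ Φ, F ⊆ G → F = G)

/-- A (relative or absolute) simplicial complex `Φ` is partitionable if it decomposes as a
disjoint union of Boolean intervals `[R F, F]`, one for each facet `F`. -/
def Partitionable {V : Type*} [DecidableEq V] (Φ : Finset (Finset V)) : Prop :=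
  ∃ R : Finset V → Finset V,
    (∀ F ∈ facets Φ, R F ⊆ F) ∧
    (∀ F ∈ facets Φ, ∀ σ : Finset V, R F ⊆ σ → σ ⊆ F → σ ∈ Φ) ∧
    (∀ σ ∈ Φ, ∃! F, F ∈ facets Φ ∧ R F ⊆ σ ∧ σ ⊆ F)

/-- The simplicial complex generated by a list of facets. -/
def gen (L : List (Finset ℕ)) : Finset (Finset ℕ) :=
  L.toFinset.biUnion Finset.powerset

/-- The simplicial complex `X̄` on vertices `{0,…,9}` with fourteen facets. -/
def Xbar : Finset (Finset ℕ) :=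
  gen [{1,2,4,9},{1,2,6,9},{1,5,6,9},{1,5,8,9},{1,4,8,9},{1,4,5,8},{1,4,5,7},
       {4,5,7,8},{1,2,5,6},{0,1,2,5},{0,2,5,6},{0,1,2,3},{1,2,3,4},{1,3,4,7}]

/-- The map on vertices defining the `i`-th copy of `X̄` in the glued complex `C_N`:
vertices of `A` (i.e. those in `{0,2,3,4,6,7,8}`) are fixed, and each vertex
`v ∈ {1,5,9}` is sent to `(i, v)`. -/
def glueVertex (i : ℕ) (v : ℕ) : ℕ ⊕ (ℕ × ℕ) :=
  if v = 1 ∨ v = 5 ∨ v = 9 then Sum.inr (i, v) else Sum.inl v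

/-- The image `φ_i(σ)` of a face `σ` of `X̄` in the `i`-th copy of `X̄`. -/
def phi (i : ℕ) (σ : Finset ℕ) : Finset (ℕ ⊕ (ℕ × ℕ)) :=
  σ.image (glueVertex i)

/-- The simplicial complex `C_N` obtained by gluing `N` disjoint copies of `X̄` along `A`. -/
def C (N : ℕ) : Finset (Finset (ℕ ⊕ (ℕ × ℕ))) :=
  (Finset.Icc 1 N).biUnion (fun i => Xbar.image (phi i))

open Finset

/-- The list of facets generating `Xbar`. -/
def xbarFacets : List (Finset ℕ) :=
  [{1,2,4,9},{1,2,6,9},{1,5,6,9},{1,5,8,9},{1,4,8,9},{1,4,5,8},{1,4,5,7},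
   {4,5,7,8},{1,2,5,6},{0,1,2,5},{0,2,5,6},{0,1,2,3},{1,2,3,4},{1,3,4,7}]

lemma mem_Xbar {σ : Finset ℕ} : σ ∈ Xbar ↔ ∃ G ∈ xbarFacets, σ ⊆ G := by
  change σ ∈ gen xbarFacets ↔ _
  simp [gen]

lemma glueVertex_injective (i : ℕ) : Function.Injective (glueVertex i) := by
  intro v w h
  unfold glueVertex at h
  split_ifs at h <;> simp_all

/-- A vertex of the `i`-th copy outside the common subcomplex lies in no other copy. -/
lemma eq_of_glueVertex_mem_phi {i j v : ℕ} {G : Finset ℕ} (hv : v = 1 ∨ v = 5 ∨ v = 9)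
    (h : glueVertex i v ∈ phi j G) : i = j := by
  simp only [phi, mem_image] at h
  obtain ⟨w, -, hw⟩ := h
  unfold glueVertex at hw
  split_ifs at hw
  simp_all

lemma phi_subset_phi {i : ℕ} {σ τ : Finset ℕ} : phi i σ ⊆ phi i τ ↔ σ ⊆ τ :=
  image_subset_image_iff (glueVertex_injective i)

lemma phi_mem_C {N i : ℕ} (hi : i ∈ Icc 1 N) {σ : Finset ℕ} (hσ : σ ∈ Xbar) : phi i σ ∈ C N :=
  mem_biUnion.2 ⟨i, hi, mem_image_of_mem _ hσ⟩

lemma exists_eq_phi_of_mem_facets {N : ℕ} {F : Finset (ℕ ⊕ (ℕ × ℕ))} (hF : F ∈ facets (C N)) :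
    ∃ i ∈ Icc 1 N, ∃ G ∈ xbarFacets, F = phi i G := by
  obtain ⟨hFC, hmax⟩ := mem_filter.1 hF
  obtain ⟨i, hi, hF'⟩ := mem_biUnion.1 hFC
  obtain ⟨σ, hσ, rfl⟩ := mem_image.1 hF'
  obtain ⟨G, hG, hσG⟩ := mem_Xbar.1 hσ
  exact ⟨i, hi, G, hG, hmax _ (phi_mem_C hi (mem_Xbar.2 ⟨G, hG, subset_rfl⟩))
    (phi_subset_phi.2 hσG)⟩

section SingleCopy

variable {Φ : Set (Finset ℕ)} {r : Finset ℕ → Finset ℕ}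

/-- If every face meeting `{1, 5, 9}` is covered by some interval `[r G, G]` with `G ∈ Φ`, but the
edge `ab` (either `26` or `48`) is not, then the vertex `5` lies in the interval of some facet
containing `a`. -/
lemma exists_covering_vertex_five (hΦ : ∀ G ∈ Φ, G ∈ xbarFacets)
    (hcov : ∀ σ ∈ Xbar, (1 ∈ σ ∨ 5 ∈ σ ∨ 9 ∈ σ) → ∃ G ∈ Φ, r G ⊆ σ ∧ σ ⊆ G)
    {a b c : ℕ} (habc : a = 2 ∧ b = 6 ∧ c = 0 ∨ a = 4 ∧ b = 8 ∧ c = 7)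
    (hab : ¬ ∃ G ∈ Φ, r G ⊆ {a, b} ∧ {a, b} ⊆ G) :
    ∃ G ∈ Φ, a ∈ G ∧ 5 ∈ G ∧ r G ⊆ {5} := by
  have cover : ∀ σ : Finset ℕ, (∃ G ∈ xbarFacets, σ ⊆ G) → (1 ∈ σ ∨ 5 ∈ σ ∨ 9 ∈ σ) →
      ∃ G ∈ Φ, r G ⊆ σ ∧ σ ⊆ G := fun σ hσ => hcov σ (mem_Xbar.2 hσ)
  have facet_ab9 : ∀ G ∈ xbarFacets, {9, a, b} ⊆ G → G = {1, a, b, 9} := by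
    obtain ⟨rfl, rfl, rfl⟩ | ⟨rfl, rfl, rfl⟩ := habc <;> decide
  have facet_ab1 : ∀ G ∈ xbarFacets, {1, a, b} ⊆ G → G = {1, a, b, 9} ∨ G = {1, a, b, 5} := by
    obtain ⟨rfl, rfl, rfl⟩ | ⟨rfl, rfl, rfl⟩ := habc <;> decide
  have facet_cb5 : ∀ G ∈ xbarFacets, {c, b, 5} ⊆ G → G = {a, b, c, 5} := by
    obtain ⟨rfl, rfl, rfl⟩ | ⟨rfl, rfl, rfl⟩ := habc <;> decide
  have facet_c15 : ∀ G ∈ xbarFacets, {1, c, 5} ⊆ G → G = {1, a, c, 5} := by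
    obtain ⟨rfl, rfl, rfl⟩ | ⟨rfl, rfl, rfl⟩ := habc <;> decide
  have facet_a5 : ∀ G ∈ xbarFacets, {a, 5} ⊆ G →
      G = {1, a, b, 5} ∨ G = {a, b, c, 5} ∨ G = {1, a, c, 5} := by
    obtain ⟨rfl, rfl, rfl⟩ | ⟨rfl, rfl, rfl⟩ := habc <;> decide
  obtain ⟨G₁, hG₁, hr₁, hs₁⟩ := cover {9, a, b}
    (by obtain ⟨rfl, rfl, rfl⟩ | ⟨rfl, rfl, rfl⟩ := habc <;> decide) (by simp)
  obtain ⟨G₂, hG₂, hr₂, hs₂⟩ := cover {1, a, b}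
    (by obtain ⟨rfl, rfl, rfl⟩ | ⟨rfl, rfl, rfl⟩ := habc <;> decide) (by simp)
  obtain ⟨G₃, hG₃, hr₃, hs₃⟩ := cover {c, b, 5}
    (by obtain ⟨rfl, rfl, rfl⟩ | ⟨rfl, rfl, rfl⟩ := habc <;> decide) (by simp)
  obtain ⟨G₄, hG₄, hr₄, hs₄⟩ := cover {1, c, 5}
    (by obtain ⟨rfl, rfl, rfl⟩ | ⟨rfl, rfl, rfl⟩ := habc <;> decide) (by simp)
  obtain ⟨G, hG, hr, hs⟩ := cover {a, 5}
    (by obtain ⟨rfl, rfl, rfl⟩ | ⟨rfl, rfl, rfl⟩ := habc <;> decide) (by simp)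
  obtain rfl := facet_ab9 _ (hΦ _ hG₁) hs₁
  obtain rfl := facet_cb5 _ (hΦ _ hG₃) hs₃
  obtain rfl := facet_c15 _ (hΦ _ hG₄) hs₄
  have h₁ : 9 ∈ r {1, a, b, 9} := by
    by_contra h
    exact hab ⟨_, hG₁, (subset_insert_iff_of_notMem h).1 hr₁, by simp [insert_subset_iff]⟩
  obtain rfl : G₂ = {1, a, b, 5} := by
    obtain rfl | h := facet_ab1 _ (hΦ _ hG₂) hs₂
    · have := hr₂ h₁
      simp only [mem_insert, mem_singleton] at this
      omega
    · exact h
  have h₂ : 1 ∈ r {1, a, b, 5} := by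
    by_contra h
    exact hab ⟨_, hG₂, (subset_insert_iff_of_notMem h).1 hr₂, by simp [insert_subset_iff]⟩
  obtain ⟨haG, h5G⟩ : a ∈ G ∧ 5 ∈ G := by simpa [insert_subset_iff] using hs
  refine ⟨G, hG, haG, h5G, (subset_insert_iff_of_notMem fun ha => ?_).1 hr⟩
  obtain rfl | rfl | rfl := facet_a5 _ (hΦ _ hG) hs
  · have := hr h₂
    simp only [mem_insert, mem_singleton] at this
    omega
  · have := hr₃ ha
    simp only [mem_insert, mem_singleton] at this
    omega
  · have := hr₄ ha
    simp only [mem_insert, mem_singleton] at this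
    omega

/-- In a single copy, the intervals must cover one of the edges `26` and `48`. -/
lemma exists_covering_edge (hΦ : ∀ G ∈ Φ, G ∈ xbarFacets)
    (hcov : ∀ σ ∈ Xbar, (1 ∈ σ ∨ 5 ∈ σ ∨ 9 ∈ σ) → ∃ G ∈ Φ, r G ⊆ σ ∧ σ ⊆ G)
    (huniq : ∀ G ∈ Φ, ∀ G' ∈ Φ, 5 ∈ G → 5 ∈ G' → r G ⊆ {5} → r G' ⊆ {5} → G = G') :
    (∃ G ∈ Φ, r G ⊆ {2, 6} ∧ {2, 6} ⊆ G) ∨ ∃ G ∈ Φ, r G ⊆ {4, 8} ∧ {4, 8} ⊆ G := by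
  by_contra! h
  obtain ⟨h26, h48⟩ := h
  obtain ⟨G, hG, h2, h5, hr⟩ := exists_covering_vertex_five hΦ hcov (a := 2) (b := 6) (c := 0)
    (by simp) (by grind)
  obtain ⟨G', hG', h4, h5', hr'⟩ := exists_covering_vertex_five hΦ hcov (a := 4) (b := 8) (c := 7)
    (by simp) (by grind)
  obtain rfl := huniq G hG G' hG' h5 h5' hr hr'
  have : ∀ G ∈ xbarFacets, 2 ∈ G → 4 ∈ G → 5 ∉ G := by decide
  exact this G (hΦ G hG) h2 h4 h5

end SingleCopy

/-- In a partitioning of `C N`, each copy of `Xbar` has a facet whose interval contains one of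
the edges `26` and `48`. -/
lemma exists_facet_covering_edge {N : ℕ} {R : Finset (ℕ ⊕ (ℕ × ℕ)) → Finset (ℕ ⊕ (ℕ × ℕ))}
    (hR : ∀ F ∈ facets (C N), R F ⊆ F)
    (hpart : ∀ σ ∈ C N, ∃! F, F ∈ facets (C N) ∧ R F ⊆ σ ∧ σ ⊆ F) {i : ℕ} (hi : i ∈ Icc 1 N) :
    ∃ G ∈ xbarFacets, phi i G ∈ facets (C N) ∧ ∃ e ∈ ({{2, 6}, {4, 8}} : Finset (Finset ℕ)),
      R (phi i G) ⊆ phi i e ∧ phi i e ⊆ phi i G := by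
  set Φ : Set (Finset ℕ) := {G | G ∈ xbarFacets ∧ phi i G ∈ facets (C N)}
  set r : Finset ℕ → Finset ℕ := fun G => G.filter fun v => glueVertex i v ∈ R (phi i G)
  have hr : ∀ G ∈ Φ, ∀ σ, R (phi i G) ⊆ phi i σ ↔ r G ⊆ σ := by
    intro G hG σ
    have himage : R (phi i G) = phi i (r G) := by
      ext x
      have := @hR _ hG.2 x
      simp only [phi, r, mem_image] at this ⊢
      grind
    rw [himage, phi_subset_phi]
  have hcov : ∀ σ ∈ Xbar, (1 ∈ σ ∨ 5 ∈ σ ∨ 9 ∈ σ) → ∃ G ∈ Φ, r G ⊆ σ ∧ σ ⊆ G := by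
    intro σ hσ hv
    obtain ⟨F, ⟨hF, hRF, hσF⟩, -⟩ := hpart _ (phi_mem_C hi hσ)
    obtain ⟨j, -, G, hG, rfl⟩ := exists_eq_phi_of_mem_facets hF
    obtain ⟨v, hvσ, hv⟩ : ∃ v ∈ σ, v = 1 ∨ v = 5 ∨ v = 9 := by grind
    obtain rfl := eq_of_glueVertex_mem_phi hv (hσF (mem_image_of_mem _ hvσ))
    exact ⟨G, ⟨hG, hF⟩, (hr G ⟨hG, hF⟩ σ).1 hRF, phi_subset_phi.1 hσF⟩
  have huniq : ∀ G ∈ Φ, ∀ G' ∈ Φ, 5 ∈ G → 5 ∈ G' → r G ⊆ {5} → r G' ⊆ {5} → G = G' := by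
    intro G hG G' hG' h5 h5' hrG hrG'
    have h := (hpart (phi i {5}) (phi_mem_C hi (mem_Xbar.2 (by decide)))).unique
      ⟨hG.2, (hr G hG _).2 hrG, phi_subset_phi.2 (by simpa using h5)⟩
      ⟨hG'.2, (hr G' hG' _).2 hrG', phi_subset_phi.2 (by simpa using h5')⟩
    exact image_injective (glueVertex_injective i) h
  obtain ⟨G, hG, hrG, he⟩ | ⟨G, hG, hrG, he⟩ :=
    exists_covering_edge (fun G hG => hG.1) hcov huniq
  · exact ⟨G, hG.1, hG.2, {2, 6}, by simp, (hr G hG _).2 hrG, phi_subset_phi.2 he⟩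
  · exact ⟨G, hG.1, hG.2, {4, 8}, by simp, (hr G hG _).2 hrG, phi_subset_phi.2 he⟩

/-- The simplicial complex `C_3` obtained by gluing 3 disjoint copies of `X̄` along `A`
is not partitionable. -/
theorem C3_not_partitionable : ¬ Partitionable (C 3) := by
  rintro ⟨R, hR, -, hpart⟩
  choose! G hG hfacet e he hRe heG using
    fun i (hi : i ∈ Icc 1 3) => exists_facet_covering_edge hR hpart hi
  obtain ⟨i, hi, j, hj, hij, heq⟩ := exists_ne_map_eq_of_card_lt_of_maps_to
    (t := ({{2, 6}, {4, 8}} : Finset (Finset ℕ))) (by decide) he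
  have hphi : phi i (e i) = phi j (e j) := by
    have hej := he j hj
    rw [heq]
    simp only [mem_insert, mem_singleton] at hej
    obtain h | h := hej <;> simp [h, phi, glueVertex]
  have heC : e i ∈ Xbar := by
    have hei := he i hi
    rw [mem_Xbar]
    simp only [mem_insert, mem_singleton] at hei
    obtain h | h := hei <;> rw [h] <;> decide
  have hcopies : phi i (G i) = phi j (G j) := (hpart _ (phi_mem_C hi heC)).unique
    ⟨hfacet i hi, hRe i hi, heG i hi⟩ ⟨hfacet j hj, hphi ▸ hRe j hj, hphi ▸ heG j hj⟩
  obtain ⟨v, hvG, hv⟩ : ∃ v ∈ G i, v = 1 ∨ v = 5 ∨ v = 9 := by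
    have : ∀ G ∈ xbarFacets, ∃ v ∈ G, v = 1 ∨ v = 5 ∨ v = 9 := by decide
    exact this _ (hG i hi)
  have hmem : glueVertex i v ∈ phi i (G i) := mem_image_of_mem _ hvG
  exact hij (eq_of_glueVertex_mem_phi hv (hcopies ▸ hmem))
end

section
/- The simplicial complex C_2 obtained by gluing 2 disjoint copies of X̄ along A is partitionable. -/
/-- A finite family of Boolean intervals `[R i, F i]`, with all `F i` of the same cardinality, is a
partitioning of the complex generated by the `F i` as soon as the intervals cover that complex
and no two of them meet. -/
theorem partitionable_of_intervals {V ι : Type*} [DecidableEq V] {Φ : Finset (Finset V)}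
    {F R : ι → Finset V} {d : ℕ} (hΦ : ∀ σ, σ ∈ Φ ↔ ∃ i, σ ⊆ F i)
    (hcard : ∀ i, (F i).card = d) (hRF : ∀ i, R i ⊆ F i)
    (hdisj : ∀ i j, R i ⊆ F j → R j ⊆ F i → i = j)
    (hcover : ∀ i, ∀ σ ∈ (F i).powerset, ∃ j, R j ⊆ σ ∧ σ ⊆ F j) :
    Partitionable Φ := by
  have hinj : Function.Injective F := fun i j h =>
    hdisj i j (h ▸ hRF i) (h ▸ hRF j)
  have hfacets : ∀ G, G ∈ facets Φ ↔ ∃ i, F i = G := by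
    intro G
    simp only [facets, Finset.mem_filter]
    constructor
    · rintro ⟨hG, hmax⟩
      obtain ⟨i, hi⟩ := (hΦ G).1 hG
      exact ⟨i, (hmax _ ((hΦ _).2 ⟨i, subset_rfl⟩) hi).symm⟩
    · rintro ⟨i, rfl⟩
      refine ⟨(hΦ _).2 ⟨i, subset_rfl⟩, fun G hG hiG => ?_⟩
      obtain ⟨j, hj⟩ := (hΦ G).1 hG
      refine Finset.eq_of_subset_of_card_le hiG ?_
      rw [hcard i, ← hcard j]
      exact Finset.card_le_card hj
  refine ⟨Function.extend F R fun _ => ∅, ?_, ?_, ?_⟩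
  · intro G hG
    obtain ⟨i, rfl⟩ := (hfacets G).1 hG
    rw [hinj.extend_apply]
    exact hRF i
  · intro G hG σ _ hσ
    obtain ⟨i, rfl⟩ := (hfacets G).1 hG
    exact (hΦ σ).2 ⟨i, hσ⟩
  · intro σ hσ
    obtain ⟨i, hi⟩ := (hΦ σ).1 hσ
    obtain ⟨j, hRj, hFj⟩ := hcover i σ (Finset.mem_powerset.2 hi)
    refine ⟨F j, ⟨(hfacets _).2 ⟨j, rfl⟩, by rwa [hinj.extend_apply], hFj⟩, ?_⟩
    rintro G ⟨hG, hRG, hσG⟩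
    obtain ⟨k, rfl⟩ := (hfacets G).1 hG
    rw [hinj.extend_apply] at hRG
    rw [hdisj k j (hRG.trans hFj) (hRj.trans hσG)]

/-- The facets of `X̄`. -/
def XbarFacet : Fin 14 → Finset ℕ :=
  ![{1,2,4,9}, {1,2,6,9}, {1,5,6,9}, {1,5,8,9}, {1,4,8,9}, {1,4,5,8}, {1,4,5,7},
    {4,5,7,8}, {1,2,5,6}, {0,1,2,5}, {0,2,5,6}, {0,1,2,3}, {1,2,3,4}, {1,3,4,7}]

/-- The minimal faces of the intervals partitioning `C 2`, as faces of the two copies of `X̄`. -/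
def XbarRestriction : Fin 2 → Fin 14 → Finset ℕ :=
  ![![{9}, {6,9}, {5,9}, {5,8}, {8}, {4,5}, {7}, {7,8}, {1,6}, {1,5}, {5}, {0,1}, {1}, {3,7}],
    ![∅, {2,6}, {6}, {5,9}, {8,9}, {1,8}, {5}, {5,8}, {2,5}, {0,1}, {0}, {0,3}, {3}, {1,7}]]

theorem mem_Xbar_iff (τ : Finset ℕ) : τ ∈ Xbar ↔ ∃ k, τ ⊆ XbarFacet k := by
  simp [Xbar, gen, XbarFacet, Fin.exists_fin_succ]

theorem mem_C_iff (N : ℕ) (σ : Finset (ℕ ⊕ (ℕ × ℕ))) :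
    σ ∈ C N ↔ ∃ p : Fin N × Fin 14, σ ⊆ phi (p.1 + 1) (XbarFacet p.2) := by
  simp only [C, Finset.mem_biUnion, Finset.mem_Icc, Finset.mem_image, mem_Xbar_iff]
  constructor
  · rintro ⟨i, ⟨hi, hiN⟩, τ, ⟨k, hk⟩, rfl⟩
    refine ⟨(⟨i - 1, by omega⟩, k), ?_⟩
    simp only [Nat.sub_add_cancel hi]
    exact Finset.image_subset_image hk
  · rintro ⟨⟨i, k⟩, h⟩
    obtain ⟨τ, hτ, rfl⟩ := Finset.subset_image_iff.1 h
    exact ⟨i + 1, ⟨by omega, by omega⟩, τ, ⟨k, by exact_mod_cast hτ⟩, rfl⟩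

/-- The simplicial complex `C_2` obtained by gluing 2 disjoint copies of `X̄` along `A`
is partitionable. -/
theorem C2_partitionable : Partitionable (C 2) := by
  refine partitionable_of_intervals (d := 4) (mem_C_iff 2)
    (R := fun p => phi (p.1 + 1) (XbarRestriction p.1 p.2)) ?_ ?_ ?_ ?_
  all_goals decide +kernel
end

section
/- The ordering 1589, 1489, 1458, 1457, 4578 of the facets of X′ is a shelling of X′, and the ordering 489, 589, 578, 157 of the facets of A′ is a shelling of A′; in particular both X′ and A′ are shellable. -/
/-- A list `L = [F_1, …, F_n]` is a shelling of the pure simplicial complex `Δ` if it is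
an ordering of the facets of `Δ` without repetition such that for every `j`, the set
`{σ ⊆ F_j : σ ⊄ F_i for all i < j}` has a unique minimal element `R_j` (equivalently,
a minimum element `R_j`). -/
def IsShelling {V : Type*} [DecidableEq V] (Δ : Finset (Finset V)) (L : List (Finset V)) :
    Prop :=
  L.Nodup ∧ (∀ F, F ∈ L ↔ F ∈ facets Δ) ∧
    ∀ j : Fin L.length, ∃ R : Finset V,
      (R ⊆ L.get j ∧ ∀ i : Fin L.length, i < j → ¬ R ⊆ L.get i) ∧
      (∀ σ : Finset V, σ ⊆ L.get j → (∀ i : Fin L.length, i < j → ¬ σ ⊆ L.get i) → R ⊆ σ)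

/-- A pure simplicial complex is shellable if it admits a shelling. -/
def Shellable {V : Type*} [DecidableEq V] (Δ : Finset (Finset V)) : Prop :=
  ∃ L : List (Finset V), IsShelling Δ L

/-- The simplicial complex `X′` on vertices `{1,4,5,7,8,9}` with five facets. -/
def X' : Finset (Finset ℕ) :=
  gen [{1,5,8,9},{1,4,8,9},{1,4,5,8},{1,4,5,7},{4,5,7,8}]

/-- The simplicial complex `A′`, generated by the triangles 489, 589, 578, 157. -/
def A' : Finset (Finset ℕ) :=
  gen [{4,8,9},{5,8,9},{5,7,8},{1,5,7}]

/-- The facets of the complex generated by an antichain are its generators. -/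
theorem mem_facets_gen {L : List (Finset ℕ)} (hL : ∀ F ∈ L, ∀ G ∈ L, F ⊆ G → F = G)
    (F : Finset ℕ) : F ∈ facets (gen L) ↔ F ∈ L := by
  rw [facets, Finset.mem_filter]
  simp only [gen, Finset.mem_biUnion, List.mem_toFinset, Finset.mem_powerset]
  constructor
  · rintro ⟨⟨G, hG, hFG⟩, hmax⟩
    exact hmax G ⟨G, hG, subset_rfl⟩ hFG ▸ hG
  · refine fun hF => ⟨⟨F, hF, subset_rfl⟩, ?_⟩
    rintro G ⟨H, hH, hGH⟩ hFG
    exact hFG.antisymm (hL F hF H hH (hFG.trans hGH) ▸ hGH)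

/-- The set of vertices `v` of the `j`-th facet whose opposite ridge lies in an earlier facet. -/
def restriction (L : List (Finset ℕ)) (j : Fin L.length) : Finset ℕ :=
  (L.get j).filter fun v => ∃ i : Fin L.length, i < j ∧ (L.get j).erase v ⊆ L.get i

/-- An antichain in which no restriction set lies in an earlier facet is a shelling. -/
theorem isShelling_gen {L : List (Finset ℕ)} (hnodup : L.Nodup)
    (hL : ∀ F ∈ L, ∀ G ∈ L, F ⊆ G → F = G)
    (hR : ∀ j i : Fin L.length, i < j → ¬ restriction L j ⊆ L.get i) :
    IsShelling (gen L) L := by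
  refine ⟨hnodup, fun F => (mem_facets_gen hL F).symm, fun j =>
    ⟨restriction L j, ⟨Finset.filter_subset _ _, hR j⟩, fun σ hσ hnew v hv => ?_⟩⟩
  obtain ⟨-, i, hij, hi⟩ := Finset.mem_filter.mp hv
  by_contra hvσ
  exact hnew i hij ((Finset.subset_erase.mpr ⟨hσ, hvσ⟩).trans hi)

/-- The ordering 1589, 1489, 1458, 1457, 4578 of the facets of `X′` is a shelling of `X′`,
and the ordering 489, 589, 578, 157 of the facets of `A′` is a shelling of `A′`;
in particular both `X′` and `A′` are shellable. -/
theorem X'_A'_shellings :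
    IsShelling X' [{1,5,8,9},{1,4,8,9},{1,4,5,8},{1,4,5,7},{4,5,7,8}] ∧
    IsShelling A' [{4,8,9},{5,8,9},{5,7,8},{1,5,7}] ∧
    Shellable X' ∧ Shellable A' := by
  have hX : IsShelling X' [{1,5,8,9},{1,4,8,9},{1,4,5,8},{1,4,5,7},{4,5,7,8}] :=
    isShelling_gen (by decide) (by decide) (by decide)
  have hA : IsShelling A' [{4,8,9},{5,8,9},{5,7,8},{1,5,7}] :=
    isShelling_gen (by decide) (by decide) (by decide)
  exact ⟨hX, hA, ⟨_, hX⟩, ⟨_, hA⟩⟩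
end
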